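/- For every smooth vector field v: ℝ³ → ℝ³ that is 2π-periodic in each coordinate and has zero mean over [−π,π]³, there exists a smooth 3×3-matrix-valued field R: ℝ³ → ℝ^{3×3}, 2π-periodic in each coordinate, such that R(x) is symmetric and trace-free for every x and div R = v, where the divergence is taken row-wise: (div R)_i = Σ_j ∂_j R_{ij}. -/

import Mathlib

/-!
STATEMENT 13: The symmetric inverse divergence: every smooth 2π-periodic mean-zero
vector field v on T³ is the row-wise divergence of a smooth 2π-periodic symmetric
trace-free matrix field R.
-/

noncomputable section

open MeasureTheory Real

/-- The fundamental domain [−π,π]³ of the torus T³. -/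
def dom : Set (Fin 3 → ℝ) := Set.Icc (fun _ => -π) (fun _ => π)

/-- Partial derivative in the i-th coordinate direction. -/
def pd (i : Fin 3) (f : (Fin 3 → ℝ) → ℝ) (x : Fin 3 → ℝ) : ℝ := fderiv ℝ f x (Pi.single i 1)

/-- A function on ℝ³ is 2π-periodic in each coordinate. -/
def Periodic3 (f : (Fin 3 → ℝ) → ℝ) : Prop :=
  ∀ (x : Fin 3 → ℝ) (i : Fin 3), f (x + (2 * π) • (Pi.single i 1 : Fin 3 → ℝ)) = f x

/-!
Write `D` for the derivative along the edge `e i` of the period box, `A` for the average along that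
edge and `P f x = ∫₀¹ s • f (x + s • e i) ds`. Integration by parts gives `P D = 1 - A`, and these
operators commute with `A D = 0`, so `D⁴ P⁴ = 1 - A`: the part of a field without mean along `e i`
is a fourth derivative along `e i`.

Fourth derivatives in a single direction `a` are inverted algebraically: an explicit symmetric
matrix of first derivatives of `u` has divergence `∂ₐ² u`. If `τ` is its trace, the same matrix
built from `∂ₐ² u` has divergence `∂ₐ⁴ u` and trace `∂ₐ² τ`, and that trace is removed by
subtracting a divergence-free symmetric matrix, a combination of the Airy stress tensors with
stress function `τ` in the three planes spanned by two of the directions `a`, `b`, `c`; this is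
where dimension at least three enters.

Removing `f - A f` one direction at a time leaves a constant field, which vanishes when the mean
does.
-/

section ParametricIntegral

open scoped ContDiff

variable {H G : Type*} [NormedAddCommGroup H] [NormedSpace ℝ H] [FiniteDimensional ℝ H]
  [NormedAddCommGroup G] [NormedSpace ℝ G] {F : H → ℝ → G}

theorem hasFDerivAt_intervalIntegral_of_contDiff (hF : ContDiff ℝ 1 (Function.uncurry F))
    (a b : ℝ) (x₀ : H) :
    HasFDerivAt (fun x => ∫ t in a..b, F x t) (∫ t in a..b, fderiv ℝ (F · t) x₀) x₀ := by
  have hsection (x : H) : Continuous (F x) := hF.continuous.comp (Continuous.prodMk_right x)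
  have hfderiv : Continuous fun p : H × ℝ => fderiv ℝ (F · p.2) p.1 :=
    (ContDiff.fderiv (f := fun p y => F y p.2) (n := 0)
      (hF.comp (contDiff_snd.prodMk (contDiff_snd.comp contDiff_fst))) contDiff_fst
      le_rfl).continuous
  obtain ⟨K, hK, hxK⟩ := exists_compact_mem_nhds x₀
  obtain ⟨C, hC⟩ :=
    (hK.prod (isCompact_uIcc (a := a) (b := b))).exists_bound_of_continuousOn hfderiv.continuousOn
  refine intervalIntegral.hasFDerivAt_integral_of_dominated_of_fderiv_le
    (F' := fun x t => fderiv ℝ (F · t) x) (bound := fun _ => C) hxK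
    (.of_forall fun x => (hsection x).aestronglyMeasurable)
    ((hsection x₀).intervalIntegrable a b)
    (hfderiv.comp (Continuous.prodMk_right x₀)).aestronglyMeasurable
    (.of_forall fun t ht x hx => hC (x, t) ⟨hx, Set.uIoc_subset_uIcc ht⟩)
    intervalIntegrable_const (.of_forall fun t _ x _ => ?_)
  have hslice : ContDiff ℝ 1 (F · t) := hF.comp (contDiff_prodMk_left t)
  exact (hslice.differentiable one_ne_zero x).hasFDerivAt

theorem fderiv_intervalIntegral_apply (hF : ContDiff ℝ 1 (Function.uncurry F))
    (a b : ℝ) (x y : H) :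
    fderiv ℝ (fun x => ∫ t in a..b, F x t) x y = ∫ t in a..b, fderiv ℝ (F · t) x y := by
  rw [(hasFDerivAt_intervalIntegral_of_contDiff hF a b x).fderiv]
  refine ContinuousLinearMap.intervalIntegral_apply (Continuous.intervalIntegrable ?_ a b) y
  exact (ContDiff.fderiv (f := fun t y => F y t) (n := 0)
    (hF.comp (contDiff_snd.prodMk contDiff_fst)) contDiff_const le_rfl).continuous

theorem contDiff_nat_intervalIntegral {n : ℕ} (hF : ContDiff ℝ n (Function.uncurry F)) (a b : ℝ) :
    ContDiff ℝ n (fun x => ∫ t in a..b, F x t) := by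
  induction n generalizing F with
  | zero =>
    simp only [Nat.cast_zero, contDiff_zero] at hF ⊢
    exact intervalIntegral.continuous_parametric_intervalIntegral_of_continuous' hF a b
  | succ n ih =>
    push_cast at hF ⊢
    have hF₁ : ContDiff ℝ 1 (Function.uncurry F) := hF.of_le le_add_self
    refine contDiff_succ_iff_fderiv_apply.2
      ⟨fun x => (hasFDerivAt_intervalIntegral_of_contDiff hF₁ a b x).differentiableAt,
        by simp, fun y => ?_⟩
    simp only [fderiv_intervalIntegral_apply hF₁]
    refine ih (F := fun x t => fderiv ℝ (F · t) x y) (ContDiff.clm_apply ?_ contDiff_const)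
    exact ContDiff.fderiv (f := fun (p : H × ℝ) y => F y p.2)
      (hF.comp (contDiff_snd.prodMk (contDiff_snd.comp contDiff_fst))) contDiff_fst le_rfl

theorem contDiff_intervalIntegral (hF : ContDiff ℝ ∞ (Function.uncurry F)) (a b : ℝ) :
    ContDiff ℝ ∞ (fun x => ∫ t in a..b, F x t) :=
  contDiff_infty.2 fun n => contDiff_nat_intervalIntegral (contDiff_infty.1 hF n) a b

end ParametricIntegral

section Algebra

variable {ι 𝕜 V : Type*} [Field 𝕜] [AddCommGroup V] [Module 𝕜 V]

variable (ι 𝕜 V) in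
/-- The symmetric trace-free matrices with entries in the module `V`. -/
def symmTraceless [Fintype ι] : Submodule 𝕜 (Matrix ι ι V) where
  carrier := {M | M.IsSymm ∧ M.trace = 0}
  add_mem' hM hN := ⟨hM.1.add hN.1, by rw [Matrix.trace_add, hM.2, hN.2, add_zero]⟩
  zero_mem' := ⟨Matrix.isSymm_zero, Matrix.trace_zero ι V⟩
  smul_mem' k _ hM := ⟨hM.1.smul k, by rw [Matrix.trace_smul, hM.2, smul_zero]⟩

/-- The row-wise divergence of a matrix with entries in `V`, where the endomorphisms `d j` of `V`
play the role of the partial derivatives. -/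
def rowDiv [Fintype ι] (d : ι → Module.End 𝕜 V) : Matrix ι ι V →ₗ[𝕜] ι → V where
  toFun M i := ∑ j, d j (M i j)
  map_add' M N := by ext i; simp [Finset.sum_add_distrib]
  map_smul' k M := by ext i; simp [Finset.smul_sum]

theorem rowDiv_apply [Fintype ι] (d : ι → Module.End 𝕜 V) (M : Matrix ι ι V) (i : ι) :
    rowDiv d M i = ∑ j, d j (M i j) := rfl

/-- The right-hand sides `f` for which the equation `rowDiv d M = f` has a symmetric trace-free
solution `M`. -/
def symmTracelessDivRange [Fintype ι] (d : ι → Module.End 𝕜 V) : Submodule 𝕜 (ι → V) :=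
  (symmTraceless ι 𝕜 V).map (rowDiv d)

/-- A symmetric matrix supported on the row and the column of the index `a`, built from `u` by
first-order operators so that its divergence is `(d a) ^ 2` applied to `u`. -/
def crossPotential [Fintype ι] [DecidableEq ι] (d : ι → Module.End 𝕜 V) (a : ι) (u : ι → V) :
    Matrix ι ι V :=
  .of fun i j => (if j = a then d a (u i) else 0) + (if i = a then d a (u j) else 0)
    - if i = a then if j = a then ∑ k, d k (u k) else 0 else 0

/-- The gradient with respect to the indices `b` and `c`, rotated by a right angle. -/
def rotatedGrad [DecidableEq ι] (d : ι → Module.End 𝕜 V) (b c : ι) : ι → Module.End 𝕜 V :=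
  Pi.single b (d c) - Pi.single c (d b)

/-- The Airy stress tensor with stress function `φ` in the plane of the indices `b` and `c`, a
divergence-free symmetric matrix. -/
def airyStress [DecidableEq ι] (d : ι → Module.End 𝕜 V) (b c : ι) (φ : V) : Matrix ι ι V :=
  .of fun i j => rotatedGrad d b c j (rotatedGrad d b c i φ)

variable {d : ι → Module.End 𝕜 V}

theorem isSymm_crossPotential [Fintype ι] [DecidableEq ι] (a : ι) (u : ι → V) :
    (crossPotential d a u).IsSymm := by
  ext i j
  simp only [crossPotential, Matrix.transpose_apply, Matrix.of_apply]
  split_ifs <;> abel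

theorem trace_crossPotential [Fintype ι] [DecidableEq ι] (a : ι) (u : ι → V) :
    (crossPotential d a u).trace = (2 : 𝕜) • d a (u a) - ∑ k, d k (u k) := by
  simp [crossPotential, Matrix.trace, Finset.sum_add_distrib, two_smul]

theorem rowDiv_crossPotential [Fintype ι] [DecidableEq ι] (hd : ∀ i j, Commute (d i) (d j))
    (a : ι) (u : ι → V) :
    rowDiv d (crossPotential d a u) = fun i => (d a ^ 2) (u i) := by
  ext i
  have hcomm (j : ι) (w : V) : d j (d a w) = d a (d j w) := LinearMap.congr_fun (hd j a) w
  simp only [rowDiv_apply, crossPotential, Matrix.of_apply, map_sub, map_add]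
  by_cases hi : i = a <;>
    simp [hi, apply_ite (d _), Finset.sum_add_distrib, hcomm, pow_two]

theorem commute_rotatedGrad [DecidableEq ι] (hd : ∀ i j, Commute (d i) (d j)) (b c i j : ι) :
    Commute (rotatedGrad d b c i) (rotatedGrad d b c j) := by
  simp only [rotatedGrad, Pi.sub_apply, Pi.single_apply]
  split_ifs <;> simp [Commute.sub_left, Commute.sub_right, hd]

theorem isSymm_airyStress [DecidableEq ι] (hd : ∀ i j, Commute (d i) (d j)) (b c : ι) (φ : V) :
    (airyStress d b c φ).IsSymm := by
  ext i j
  exact LinearMap.congr_fun (commute_rotatedGrad hd b c i j) φ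

theorem sum_mul_rotatedGrad [Fintype ι] [DecidableEq ι] (hd : ∀ i j, Commute (d i) (d j))
    (b c : ι) : ∑ j, d j * rotatedGrad d b c j = 0 := by
  simp [rotatedGrad, mul_sub, Pi.single_apply, (hd b c).eq]

theorem rowDiv_airyStress [Fintype ι] [DecidableEq ι] (hd : ∀ i j, Commute (d i) (d j))
    (b c : ι) (φ : V) : rowDiv d (airyStress d b c φ) = 0 := by
  ext i
  simpa [rowDiv_apply, airyStress] using
    LinearMap.congr_fun (sum_mul_rotatedGrad hd b c) (rotatedGrad d b c i φ)

theorem trace_airyStress [Fintype ι] [DecidableEq ι] {b c : ι} (hbc : b ≠ c) (φ : V) :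
    (airyStress d b c φ).trace = (d b ^ 2) φ + (d c ^ 2) φ := by
  have hsum : ∑ i, rotatedGrad d b c i * rotatedGrad d b c i = d b ^ 2 + d c ^ 2 := by
    simp [rotatedGrad, mul_sub, Pi.single_apply, hbc, hbc.symm, pow_two, add_comm]
  simpa [Matrix.trace, airyStress] using LinearMap.congr_fun hsum φ

theorem exists_isSymm_rowDiv_eq_zero_trace_eq [Fintype ι] [NeZero (2 : 𝕜)]
    (hd : ∀ i j, Commute (d i) (d j)) {a b c : ι} (hab : a ≠ b) (hac : a ≠ c) (hbc : b ≠ c)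
    (φ : V) : ∃ K : Matrix ι ι V, K.IsSymm ∧ rowDiv d K = 0 ∧ K.trace = (d a ^ 2) φ := by
  classical
  -- The traces combine as `(∂ₐ² + ∂_b²) + (∂ₐ² + ∂_c²) - (∂_b² + ∂_c²) = 2 ∂ₐ²`.
  refine ⟨(2⁻¹ : 𝕜) • (airyStress d a b φ + airyStress d a c φ - airyStress d b c φ), ?_, ?_, ?_⟩
  · exact (((isSymm_airyStress hd a b φ).add (isSymm_airyStress hd a c φ)).sub
      (isSymm_airyStress hd b c φ)).smul _
  · simp only [map_smul, map_sub, map_add, rowDiv_airyStress hd, add_zero, sub_zero, smul_zero]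
  · simp only [Matrix.trace_smul, Matrix.trace_sub, Matrix.trace_add, trace_airyStress hab,
      trace_airyStress hac, trace_airyStress hbc]
    have h2 : (2 : 𝕜) ≠ 0 := two_ne_zero
    match_scalars <;> field_simp <;> ring

theorem pow_four_mem_symmTracelessDivRange [Fintype ι] [NeZero (2 : 𝕜)]
    (hι : 2 < Fintype.card ι) (hd : ∀ i j, Commute (d i) (d j)) (a : ι) (u : ι → V) :
    (fun i => (d a ^ 4) (u i)) ∈ symmTracelessDivRange d := by
  classical
  have hcard : 1 < (Finset.univ.erase a).card := by
    rw [Finset.card_erase_of_mem (Finset.mem_univ a), Finset.card_univ]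
    lia
  obtain ⟨b, hb, c, hc, hbc⟩ := Finset.one_lt_card.1 hcard
  have hab : a ≠ b := (Finset.ne_of_mem_erase hb).symm
  have hac : a ≠ c := (Finset.ne_of_mem_erase hc).symm
  obtain ⟨K, hKsymm, hKdiv, hKtrace⟩ := exists_isSymm_rowDiv_eq_zero_trace_eq hd hab hac hbc
    (crossPotential d a u).trace
  have htrace : (crossPotential d a fun i => (d a ^ 2) (u i)).trace = K.trace := by
    have hcomm (j : ι) (w : V) : d j ((d a ^ 2) w) = (d a ^ 2) (d j w) :=
      LinearMap.congr_fun ((hd j a).pow_right 2) w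
    rw [hKtrace]
    simp only [trace_crossPotential, hcomm, map_sub, map_smul, map_sum]
  refine ⟨crossPotential d a (fun i => (d a ^ 2) (u i)) - K,
    ⟨(isSymm_crossPotential a _).sub hKsymm, by rw [Matrix.trace_sub, htrace, sub_self]⟩, ?_⟩
  ext i
  rw [map_sub, hKdiv, rowDiv_crossPotential hd, sub_zero, ← Module.End.mul_apply, ← pow_add]

theorem pow_mul_pow_eq_one_sub {R : Type*} [Ring R] {D A P : R} (hDA : Commute D A)
    (hDP : Commute D P) (hAD : A * D = 0) (hPD : P * D = 1 - A) {m : ℕ} (hm : m ≠ 0) :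
    D ^ m * P ^ m = 1 - A := by
  have hidem : IsIdempotentElem (1 - A) := by
    rw [isIdempotentElem_iff_mul_one_sub_self, sub_sub_cancel, ← hPD, mul_assoc, hDA.eq, hAD,
      mul_zero]
  rw [← hDP.mul_pow, hDP.eq, hPD, hidem.pow_eq hm]

end Algebra

section SmoothPeriodic

open scoped ContDiff Polynomial

variable {ι H : Type*} [NormedAddCommGroup H] [NormedSpace ℝ H]
  (c : ι → H) (E : Type*) [NormedAddCommGroup E] [NormedSpace ℝ E]

/-- The smooth functions `H → E` that are periodic with respect to each of the vectors `c i`. -/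
def smoothPeriodic : Submodule ℝ (H → E) where
  carrier := {f | ContDiff ℝ ∞ f ∧ ∀ i, Function.Periodic f (c i)}
  add_mem' hf hg := ⟨hf.1.add hg.1, fun i => (hf.2 i).add (hg.2 i)⟩
  zero_mem' := ⟨contDiff_const, fun _ _ => rfl⟩
  smul_mem' k _ hf := ⟨hf.1.const_smul k, fun i x => congrArg (k • ·) (hf.2 i x)⟩

variable {c E}

theorem smoothPeriodic.contDiff (f : smoothPeriodic c E) : ContDiff ℝ ∞ (f : H → E) := f.2.1

theorem smoothPeriodic.differentiable (f : smoothPeriodic c E) : Differentiable ℝ (f : H → E) :=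
  (smoothPeriodic.contDiff f).differentiable (by simp)

variable (c E) in
/-- The directional derivative along `y`. -/
def dirDeriv (y : H) : Module.End ℝ (smoothPeriodic c E) where
  toFun f := ⟨fun x => fderiv ℝ f x y,
    ((smoothPeriodic.contDiff f).fderiv_right (m := ∞) (by simp)).clm_apply contDiff_const,
    fun i x => by simp only [← fderiv_comp_add_right, (f.2.2 i).funext]⟩
  map_add' f g := by
    ext x
    simp [fderiv_add (smoothPeriodic.differentiable f x) (smoothPeriodic.differentiable g x)]
  map_smul' k f := by
    ext x
    simp [fderiv_const_smul (smoothPeriodic.differentiable f x)]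

@[simp]
theorem dirDeriv_apply (y : H) (f : smoothPeriodic c E) (x : H) :
    (dirDeriv c E y f : H → E) x = fderiv ℝ f x y := rfl

theorem dirDeriv_smul (k : ℝ) (y : H) : dirDeriv c E (k • y) = k • dirDeriv c E y := by
  ext f x
  simp

theorem commute_dirDeriv (y z : H) : Commute (dirDeriv c E y) (dirDeriv c E z) := by
  ext f x
  have hsymm : IsSymmSndFDerivAt ℝ (f : H → E) x :=
    (smoothPeriodic.contDiff f).contDiffAt.isSymmSndFDerivAt
      (by simpa using ENat.LEInfty.out)
  have hfderiv : DifferentiableAt ℝ (fderiv ℝ (f : H → E)) x :=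
    ((smoothPeriodic.contDiff f).fderiv_right (m := ∞) (by simp)).differentiable (by simp) x
  have hsnd (y z : H) :
      (dirDeriv c E y (dirDeriv c E z f) : H → E) x = fderiv ℝ (fderiv ℝ (f : H → E)) x y z := by
    change fderiv ℝ (fun x => fderiv ℝ (f : H → E) x z) x y = _
    simp [fderiv_clm_apply hfderiv (differentiableAt_const z)]
  simpa [hsnd] using hsymm y z

theorem contDiff_eval_smul_translate (w : ℝ[X]) (y : H) (f : smoothPeriodic c E) :
    ContDiff ℝ ∞ (Function.uncurry fun (x : H) (s : ℝ) => w.eval s • (f : H → E) (x + s • y)) := by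
  have hw : ContDiff ℝ ∞ fun s : ℝ => w.eval s := by simpa using w.contDiff_aeval (𝕜 := ℝ) ∞
  exact (hw.comp contDiff_snd).smul
    ((smoothPeriodic.contDiff f).comp (contDiff_fst.add (contDiff_snd.smul contDiff_const)))

theorem intervalIntegrable_eval_smul_translate (w : ℝ[X]) (y : H) (f : smoothPeriodic c E)
    (x : H) (a b : ℝ) :
    IntervalIntegrable (fun s => w.eval s • (f : H → E) (x + s • y)) volume a b :=
  ((contDiff_eval_smul_translate w y f).continuous.comp
    (Continuous.prodMk_right x)).intervalIntegrable a b

variable [FiniteDimensional ℝ H]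

variable (c E) in
/-- The average of the translates of a function along the segment from `0` to `y`, with weight `w`.
Polynomial weights suffice: `1` gives the mean along `y` and `X` inverts the derivative along `y`
up to that mean, see `weightedAverage_X_mul_dirDeriv`. -/
def weightedAverage (w : ℝ[X]) (y : H) : Module.End ℝ (smoothPeriodic c E) where
  toFun f := ⟨fun x => ∫ s in (0 : ℝ)..1, w.eval s • (f : H → E) (x + s • y),
    contDiff_intervalIntegral (contDiff_eval_smul_translate w y f) 0 1,
    fun i x => by simp only [add_right_comm x (c i), f.2.2 i _]⟩
  map_add' f g := by
    ext x
    simp [← intervalIntegral.integral_add (intervalIntegrable_eval_smul_translate w y f x 0 1)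
      (intervalIntegrable_eval_smul_translate w y g x 0 1)]
  map_smul' k f := by
    ext x
    simp [← intervalIntegral.integral_smul, smul_comm k]

theorem weightedAverage_apply (w : ℝ[X]) (y : H) (f : smoothPeriodic c E) (x : H) :
    (weightedAverage c E w y f : H → E) x =
      ∫ s in (0 : ℝ)..1, w.eval s • (f : H → E) (x + s • y) := rfl

theorem commute_dirDeriv_weightedAverage (w : ℝ[X]) (y z : H) :
    Commute (dirDeriv c E z) (weightedAverage c E w y) := by
  ext f x
  have hdiff (s : ℝ) : DifferentiableAt ℝ (fun x => (f : H → E) (x + s • y)) x :=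
    (smoothPeriodic.differentiable f).comp (by fun_prop) x
  change fderiv ℝ (fun x => ∫ s in (0 : ℝ)..1, w.eval s • (f : H → E) (x + s • y)) x z = _
  rw [fderiv_intervalIntegral_apply ((contDiff_eval_smul_translate w y f).of_le (by simp))]
  refine intervalIntegral.integral_congr fun s _ => ?_
  simp [fderiv_fun_const_smul (hdiff s), fderiv_comp_add_right]

variable [CompleteSpace E]

theorem weightedAverage_mul_dirDeriv (w : ℝ[X]) (i : ι) :
    weightedAverage c E w (c i) * dirDeriv c E (c i) =
      (w.eval 1 - w.eval 0) • 1 - weightedAverage c E (Polynomial.derivative w) (c i) := by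
  ext f x
  have hderiv (s : ℝ) : HasDerivAt (fun s => (f : H → E) (x + s • c i))
      ((dirDeriv c E (c i) f : H → E) (x + s • c i)) s := by
    have hline : HasDerivAt (fun s : ℝ => x + s • c i) (c i) s := by
      simpa using ((hasDerivAt_id s).smul_const (c i)).const_add x
    exact (smoothPeriodic.differentiable f _).hasFDerivAt.comp_hasDerivAt s hline
  have hparts := intervalIntegral.integral_smul_deriv_eq_deriv_smul
    (fun s _ => w.hasDerivAt s) (fun s _ => hderiv s)
    ((Polynomial.derivative w).continuous.intervalIntegrable 0 1) (by
      simpa using intervalIntegrable_eval_smul_translate 1 (c i) (dirDeriv c E (c i) f) x 0 1)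
  simpa [weightedAverage_apply, f.2.2 i x, sub_smul] using hparts

theorem weightedAverage_one_mul_dirDeriv (i : ι) :
    weightedAverage c E 1 (c i) * dirDeriv c E (c i) = 0 := by
  rw [weightedAverage_mul_dirDeriv]
  ext f x
  simp [weightedAverage_apply]

theorem weightedAverage_X_mul_dirDeriv (i : ι) :
    weightedAverage c E Polynomial.X (c i) * dirDeriv c E (c i) =
      1 - weightedAverage c E 1 (c i) := by
  simp [weightedAverage_mul_dirDeriv]

theorem dirDeriv_pow_mul_weightedAverage_X_pow (i : ι) {m : ℕ} (hm : m ≠ 0) :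
    dirDeriv c E (c i) ^ m * weightedAverage c E Polynomial.X (c i) ^ m =
      1 - weightedAverage c E 1 (c i) :=
  pow_mul_pow_eq_one_sub (R := Module.End ℝ (smoothPeriodic c E))
    (commute_dirDeriv_weightedAverage _ _ _) (commute_dirDeriv_weightedAverage _ _ _)
    (weightedAverage_one_mul_dirDeriv i) (weightedAverage_X_mul_dirDeriv i) hm

end SmoothPeriodic

section Box

open scoped ContDiff

variable {n : ℕ} {E : Type*} [NormedAddCommGroup E] [NormedSpace ℝ E] {a T : Fin n → ℝ}

/-- The vector along the `i`-th edge of a box with side lengths `T`. -/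
def boxEdge (T : Fin n → ℝ) (i : Fin n) : Fin n → ℝ := T i • Pi.single i 1

/-- The partial derivatives as operators on the smooth functions with period `T i` in the `i`-th
coordinate. -/
def partialDeriv (T : Fin n → ℝ) (E : Type*) [NormedAddCommGroup E] [NormedSpace ℝ E]
    (i : Fin n) : Module.End ℝ (smoothPeriodic (boxEdge T) E) :=
  dirDeriv (boxEdge T) E (Pi.single i 1)

theorem partialDeriv_apply (i : Fin n) (f : smoothPeriodic (boxEdge T) E) (x : Fin n → ℝ) :
    (partialDeriv T E i f : (Fin n → ℝ) → E) x = fderiv ℝ f x (Pi.single i 1) := rfl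

theorem dirDeriv_boxEdge (i : Fin n) :
    dirDeriv (boxEdge T) E (boxEdge T i) = T i • partialDeriv T E i :=
  dirDeriv_smul _ _

theorem commute_partialDeriv (i j : Fin n) :
    Commute (partialDeriv T E i) (partialDeriv T E j) :=
  commute_dirDeriv _ _

theorem smoothPeriodic.integrableOn_Icc (a b : Fin n → ℝ) (f : smoothPeriodic (boxEdge T) E) :
    IntegrableOn (f : (Fin n → ℝ) → E) (Set.Icc a b) :=
  (smoothPeriodic.contDiff f).continuous.integrableOn_Icc

theorem insertNth_add_boxEdge {n : ℕ} (T : Fin (n + 1) → ℝ) (i : Fin (n + 1)) (t : ℝ)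
    (x : Fin n → ℝ) :
    (i.insertNth (t + T i) x : Fin (n + 1) → ℝ) = i.insertNth t x + boxEdge T i := by
  ext j
  cases j using Fin.succAboveCases i <;> simp [boxEdge]

theorem setIntegral_partialDeriv_eq_zero (hT : 0 ≤ T) (i : Fin n)
    (f : smoothPeriodic (boxEdge T) E) :
    ∫ x in Set.Icc a (a + T), (partialDeriv T E i f : (Fin n → ℝ) → E) x = 0 := by
  obtain _ | n := n
  · exact i.elim0
  let δ : Fin (n + 1) → ℝ := Pi.single i 1
  have hdiv (x : Fin (n + 1) → ℝ) :
      ∑ j, δ j • fderiv ℝ (f : (Fin (n + 1) → ℝ) → E) x (Pi.single j 1) =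
        (partialDeriv T E i f : (Fin (n + 1) → ℝ) → E) x := by
    simp [δ, Pi.single_apply, partialDeriv_apply]
  have hgauss := integral_divergence_of_hasFDerivAt_off_countable' a (a + T)
    (le_add_of_nonneg_right hT) (fun j => δ j • (f : (Fin (n + 1) → ℝ) → E))
    (fun j x => δ j • fderiv ℝ f x) ∅ Set.countable_empty
    (fun j => ((smoothPeriodic.contDiff f).continuous.const_smul (δ j)).continuousOn)
    (fun x _ j => (smoothPeriodic.differentiable f x).hasFDerivAt.const_smul (δ j))
    (by
      simpa only [smul_apply, hdiv] using
         smoothPeriodic.integrableOn_Icc a (a + T) (partialDeriv T E i f))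
  simpa [hdiv, insertNth_add_boxEdge, f.2.2 _ _] using hgauss

variable [CompleteSpace E]

theorem setIntegral_weightedAverage_one (hT : 0 ≤ T) (i : Fin n)
    (f : smoothPeriodic (boxEdge T) E) :
    ∫ x in Set.Icc a (a + T),
        (weightedAverage (boxEdge T) E 1 (boxEdge T i) f : (Fin n → ℝ) → E) x =
      ∫ x in Set.Icc a (a + T), (f : (Fin n → ℝ) → E) x := by
  set g := weightedAverage (boxEdge T) E Polynomial.X (boxEdge T i) f
  have hg : T i • partialDeriv T E i g = f - weightedAverage (boxEdge T) E 1 (boxEdge T i) f := by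
    rw [← LinearMap.smul_apply, ← dirDeriv_boxEdge]
    simpa using LinearMap.congr_fun
      (dirDeriv_pow_mul_weightedAverage_X_pow (c := boxEdge T) (E := E) i one_ne_zero) f
  have hzero : ∫ x in Set.Icc a (a + T), ((f : (Fin n → ℝ) → E) x -
      (weightedAverage (boxEdge T) E 1 (boxEdge T i) f : (Fin n → ℝ) → E) x) = 0 := by
    simpa [integral_smul, setIntegral_partialDeriv_eq_zero hT] using
      congrArg (fun h : smoothPeriodic (boxEdge T) E =>
        ∫ x in Set.Icc a (a + T), (h : (Fin n → ℝ) → E) x) hg.symm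
  rw [integral_sub (smoothPeriodic.integrableOn_Icc _ _ _) (smoothPeriodic.integrableOn_Icc _ _ _),
    sub_eq_zero] at hzero
  exact hzero.symm

theorem eq_zero_of_partialDeriv_eq_zero_of_setIntegral_eq_zero (hT : ∀ i, 0 < T i)
    {f : smoothPeriodic (boxEdge T) E} (hf : ∀ i, partialDeriv T E i f = 0)
    (hmean : ∫ x in Set.Icc a (a + T), (f : (Fin n → ℝ) → E) x = 0) : f = 0 := by
  have hfderiv (x : Fin n → ℝ) : fderiv ℝ (f : (Fin n → ℝ) → E) x = 0 := by
    refine ContinuousLinearMap.coe_injective (LinearMap.pi_ext' fun i => LinearMap.ext_ring ?_)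
    exact congrFun (congrArg Subtype.val (hf i)) x
  have hconst (x : Fin n → ℝ) : (f : (Fin n → ℝ) → E) x = (f : (Fin n → ℝ) → E) 0 :=
    is_const_of_fderiv_eq_zero (smoothPeriodic.differentiable f) hfderiv x 0
  have hvol : volume.real (Set.Icc a (a + T)) ≠ 0 := by
    rw [measureReal_def, Real.volume_Icc_pi_toReal (le_add_of_nonneg_right fun i => (hT i).le)]
    simp [Finset.prod_ne_zero_iff, (hT _).ne']
  have hzero : (f : (Fin n → ℝ) → E) 0 = 0 := by
    simpa [hconst, hvol] using hmean
  ext x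
  exact (hconst x).trans hzero

theorem sub_weightedAverage_one_mem_symmTracelessDivRange (hn : 2 < n) (i : Fin n)
    (f : Fin n → smoothPeriodic (boxEdge T) E) :
    (fun k => f k - weightedAverage (boxEdge T) E 1 (boxEdge T i) (f k)) ∈
      symmTracelessDivRange (partialDeriv T E) := by
  convert pow_four_mem_symmTracelessDivRange (by simpa using hn) commute_partialDeriv i
    (fun k => T i ^ 4 • (weightedAverage (boxEdge T) E Polynomial.X (boxEdge T i) ^ 4) (f k))
    using 2 with k
  have hinv := LinearMap.congr_fun (dirDeriv_pow_mul_weightedAverage_X_pow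
    (c := boxEdge T) (E := E) i four_ne_zero) (f k)
  simpa [dirDeriv_boxEdge, smul_pow] using hinv.symm

theorem mem_symmTracelessDivRange_of_setIntegral_eq_zero (hn : 2 < n) (hT : ∀ i, 0 < T i)
    (f : Fin n → smoothPeriodic (boxEdge T) E)
    (hmean : ∀ k, ∫ x in Set.Icc a (a + T), (f k : (Fin n → ℝ) → E) x = 0) :
    f ∈ symmTracelessDivRange (partialDeriv T E) := by
  suffices h : ∀ (s : Finset (Fin n)) (f : Fin n → smoothPeriodic (boxEdge T) E),
      (∀ k, ∫ x in Set.Icc a (a + T), (f k : (Fin n → ℝ) → E) x = 0) →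
      (∀ i ∉ s, ∀ k, partialDeriv T E i (f k) = 0) →
      f ∈ symmTracelessDivRange (partialDeriv T E) from
    h Finset.univ f hmean fun i hi => absurd (Finset.mem_univ i) hi
  intro s
  induction s using Finset.induction with
  | empty =>
    intro f hmean hf
    have hzero : f = 0 := funext fun k =>
      eq_zero_of_partialDeriv_eq_zero_of_setIntegral_eq_zero hT
        (fun i => hf i (Finset.notMem_empty i) k) (hmean k)
    exact hzero ▸ zero_mem _
  | insert i s _ ih =>
    intro f hmean hf
    set A := weightedAverage (boxEdge T) E 1 (boxEdge T i) with hA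
    have hpartial (j : Fin n) (g : smoothPeriodic (boxEdge T) E) :
        partialDeriv T E j (A g) = A (partialDeriv T E j g) :=
      LinearMap.congr_fun (commute_dirDeriv_weightedAverage 1 (boxEdge T i) (Pi.single j 1)) g
    have hAf : (fun k => A (f k)) ∈ symmTracelessDivRange (partialDeriv T E) := by
      refine ih _ (fun k => ?_) fun j hj k => ?_
      · rw [hA, setIntegral_weightedAverage_one fun i => (hT i).le, hmean]
      · rw [hpartial]
        obtain rfl | hji := eq_or_ne j i
        · have hzero := LinearMap.congr_fun (weightedAverage_one_mul_dirDeriv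
            (c := boxEdge T) (E := E) j) (f k)
          simpa [dirDeriv_boxEdge, (hT j).ne'] using hzero
        · rw [hf j (by simp [hj, hji]) k, map_zero]
    convert add_mem (sub_weightedAverage_one_mem_symmTracelessDivRange hn i f) hAf using 1
    exact funext fun k => (sub_add_cancel (f k) (A (f k))).symm

theorem symmetric_inverse_divergence_general (hn : 2 < n) (hT : ∀ i, 0 < T i)
    (v : (Fin n → ℝ) → Fin n → E)
    (hsmooth : ∀ i, ContDiff ℝ ∞ (fun x => v x i))
    (hper : ∀ i j, Function.Periodic (fun x => v x i) (boxEdge T j))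
    (hmean : ∀ i, ∫ x in Set.Icc a (a + T), v x i = 0) :
    ∃ R : (Fin n → ℝ) → Matrix (Fin n) (Fin n) E,
      (∀ i j, ContDiff ℝ ∞ (fun x => R x i j)) ∧
      (∀ i j k, Function.Periodic (fun x => R x i j) (boxEdge T k)) ∧
      (∀ x, (R x).IsSymm) ∧
      (∀ x, (R x).trace = 0) ∧
      (∀ x i, ∑ j, fderiv ℝ (fun y => R y i j) x (Pi.single j 1) = v x i) := by
  obtain ⟨M, ⟨hsymm, htrace⟩, hdiv⟩ := mem_symmTracelessDivRange_of_setIntegral_eq_zero hn hT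
    (fun i => ⟨fun x => v x i, hsmooth i, hper i⟩) hmean
  let evalAt (x : Fin n → ℝ) : smoothPeriodic (boxEdge T) E →+ E :=
    (Pi.evalAddMonoidHom _ x).comp (smoothPeriodic (boxEdge T) E).subtype.toAddMonoidHom
  refine ⟨fun x => M.map (evalAt x), fun i j => (M i j).2.1, fun i j => (M i j).2.2,
    fun x => hsymm.map _, fun x => ?_, fun x i => ?_⟩
  · rw [← AddMonoidHom.map_trace, htrace, map_zero]
  · have hrow := congrArg (evalAt x) (congrFun hdiv i)
    rw [rowDiv_apply, map_sum] at hrow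
    exact hrow

end Box

theorem symmetric_inverse_divergence
    (v : (Fin 3 → ℝ) → (Fin 3 → ℝ))
    (hsmooth : ∀ i, ContDiff ℝ (⊤ : ℕ∞) (fun x => v x i))
    (hper : ∀ i, Periodic3 (fun x => v x i))
    (hmean : ∀ i, ∫ x in dom, v x i = 0) :
    ∃ R : (Fin 3 → ℝ) → Matrix (Fin 3) (Fin 3) ℝ,
      (∀ i j, ContDiff ℝ (⊤ : ℕ∞) (fun x => R x i j)) ∧
      (∀ i j, Periodic3 (fun x => R x i j)) ∧
      (∀ x, (R x).IsSymm) ∧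
      (∀ x, Matrix.trace (R x) = 0) ∧
      (∀ x i, ∑ j, pd j (fun y => R y i j) x = v x i) := by
  have hdom : dom = Set.Icc (fun _ => -π) ((fun _ => -π) + fun _ => 2 * π) := by
    simp only [dom, Pi.add_def, neg_add_eq_sub, two_mul, add_sub_cancel_right]
  obtain ⟨R, hR, hRper, hRsymm, hRtrace, hRdiv⟩ :=
    symmetric_inverse_divergence_general (n := 3) (T := fun _ => 2 * π) (by norm_num)
      (fun _ => two_pi_pos) v hsmooth (fun i j x => hper i x j) (hdom ▸ hmean)
  exact ⟨R, hR, fun i j x k => hRper i j k x, hRsymm, hRtrace, hRdiv⟩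

end
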